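/- The function K₊ is continuous on all of ℂ — in particular it extends continuously across the branch cut iℝ≥0 of ln₊ — and K₊(0) = 0; in particular K₊(c) → 0 as c → 0. -/

import Mathlib

noncomputable section

/-- `ln₊`: the determination of the logarithm with branch cut at `iℝ⁺` and `ln₊ 1 = 0`
(a total function on `ℂ` via the convention `Complex.log 0 = 0`). -/
noncomputable def lnPlus (c : ℂ) : ℂ :=
  Complex.log (Complex.I * c) - Complex.I * Real.pi / 2

/-- `K₊ c = -Im (c ln₊ c - c)`. -/
noncomputable def KPlus (c : ℂ) : ℝ := -(c * lnPlus c - c).im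

lemma continuous_im_mul_arg : Continuous fun z : ℂ => z.im * Complex.arg z := by
  rw [continuous_iff_continuousAt]
  intro z
  by_cases hz : z ∈ Complex.slitPlane
  · exact Complex.continuous_im.continuousAt.mul (Complex.continuousAt_arg hz)
  · have h0 : z.im = 0 := by
      by_contra h
      exact hz (Or.inr h)
    unfold ContinuousAt
    simp only [h0, zero_mul]
    apply squeeze_zero_norm (a := fun w : ℂ => |w.im| * Real.pi)
    · intro w
      rw [norm_mul, Real.norm_eq_abs, Real.norm_eq_abs]
      exact mul_le_mul_of_nonneg_left (Complex.abs_arg_le_pi w) (abs_nonneg _)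
    · have : Continuous fun w : ℂ => |w.im| * Real.pi := by fun_prop
      simpa [h0] using this.tendsto z

lemma continuous_im_mul_log_norm : Continuous fun z : ℂ => z.im * Real.log ‖z‖ := by
  rw [continuous_iff_continuousAt]
  intro z
  by_cases hz : z = 0
  · subst hz
    unfold ContinuousAt
    simp only [Complex.zero_im, zero_mul]
    apply squeeze_zero_norm (a := fun w : ℂ => |‖w‖ * Real.log ‖w‖|)
    · intro w
      rw [norm_mul, Real.norm_eq_abs, Real.norm_eq_abs, abs_mul, abs_norm]
      exact mul_le_mul_of_nonneg_right (Complex.abs_im_le_norm w) (abs_nonneg _)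
    · have : Continuous fun w : ℂ => |‖w‖ * Real.log ‖w‖| :=
        (Real.continuous_mul_log.comp continuous_norm).abs
      simpa using this.tendsto 0
  · exact Complex.continuous_im.continuousAt.mul
      (continuous_norm.continuousAt.log (norm_ne_zero_iff.mpr hz))

lemma KPlus_eq (c : ℂ) : KPlus c = -((Complex.I * c).im * Complex.arg (Complex.I * c)
    - c.re * (Real.pi / 2) + c.im * Real.log ‖c‖ - c.im) := by
  have h : Complex.I * (Real.pi : ℂ) / 2 = ((Real.pi / 2 : ℝ) : ℂ) * Complex.I := by
    push_cast; ring
  simp only [KPlus, lnPlus, h, Complex.sub_im, Complex.mul_im, Complex.sub_re, Complex.log_re,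
    Complex.log_im, norm_mul, Complex.norm_I, one_mul, Complex.re_ofReal_mul, Complex.im_ofReal_mul,
    Complex.I_re, Complex.I_im]
  simp
  ring

/-- `K₊` is continuous on all of `ℂ` (in particular across the branch cut `iℝ≥0` of `ln₊`),
`K₊ 0 = 0`, and `K₊ c → 0` as `c → 0`. -/
theorem KPlus_continuous :
    Continuous KPlus ∧ KPlus 0 = 0 ∧ Filter.Tendsto KPlus (nhds 0) (nhds 0) := by
  have hc : Continuous KPlus := by
    rw [funext KPlus_eq]
    have h1 : Continuous fun c : ℂ => (Complex.I * c).im * Complex.arg (Complex.I * c) :=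
      continuous_im_mul_arg.comp (continuous_const.mul continuous_id)
    have h2 := continuous_im_mul_log_norm
    exact (((h1.sub (Complex.continuous_re.mul continuous_const)).add h2).sub
      Complex.continuous_im).neg
  have h0 : KPlus 0 = 0 := by simp [KPlus]
  refine ⟨hc, h0, ?_⟩
  simpa [h0] using hc.tendsto 0
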